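/- Assume f satisfies (f1) and (f2), and let α ∈ G_k for some k ≥ 1, with u = u(·,α). Let φ be a C¹ function on [0,∞) with φ(0) = 1, φ'(0) = 0, satisfying the linearized equation φ''(r) + ((n−1)/r)φ'(r) + f'(u(r))φ(r) = 0 at every r > 0 with u(r) ≠ 0. Then φ has at least one zero in (T_{k−1}(α), Z_k(α)) (where T₀(α) := 0; this includes the case Z_k(α) = ∞). -/

import Mathlib

open Set Filter MeasureTheory

namespace Paper

noncomputable section

/-- `F s = ∫₀ˢ f t dt`. -/
def Fint (f : ℝ → ℝ) (s : ℝ) : ℝ := ∫ t in (0:ℝ)..s, f t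

/-- Hypothesis (f1): `f` is odd, `f 0 = 0`, there are `β > b > 0` with `f > 0` on `(b,∞)`,
`f ≤ 0`, `f ≢ 0` on `[0,b]`, and `F β = 0`. -/
def Hf1 (f : ℝ → ℝ) (b β : ℝ) : Prop :=
  (∀ s, f (-s) = -f s) ∧ f 0 = 0 ∧ 0 < b ∧ b < β ∧
    (∀ s, b < s → 0 < f s) ∧ (∀ s ∈ Icc (0:ℝ) b, f s ≤ 0) ∧
    (∃ s ∈ Icc (0:ℝ) b, f s ≠ 0) ∧ Fint f β = 0

/-- Hypothesis (f2): `f` continuous on `[0,∞)`, C¹ on `(0,∞)`, `f' ∈ L¹(0,1)`. -/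
def Hf2 (f : ℝ → ℝ) : Prop :=
  ContinuousOn f (Ici 0) ∧ (∀ s : ℝ, 0 < s → DifferentiableAt ℝ f s) ∧
    ContinuousOn (deriv f) (Ioi 0) ∧ IntegrableOn (deriv f) (Ioo 0 1)

/-- Hypothesis (f3): `f s ≥ f' s * (s - β)` for `s ≥ β`. -/
def Hf3 (f : ℝ → ℝ) (β : ℝ) : Prop := ∀ s, β ≤ s → deriv f s * (s - β) ≤ f s

/-- Hypothesis (f4): `(F/f)' s ≥ (n-2)/(2n)` for `s > β`. -/
def Hf4 (n : ℕ) (f : ℝ → ℝ) (β : ℝ) : Prop :=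
  ∀ s, β < s → ((n : ℝ) - 2) / (2 * (n : ℝ)) ≤ deriv (fun t => Fint f t / f t) s

/-- Hypothesis (f4'): `(F/f)' s ≥ (n-2)/2` for `s > β`. -/
def Hf4' (n : ℕ) (f : ℝ → ℝ) (β : ℝ) : Prop :=
  ∀ s, β < s → ((n : ℝ) - 2) / 2 ≤ deriv (fun t => Fint f t / f t) s

/-- Hypothesis (f5): `s ↦ s f' s / f s` is nonincreasing on `[β,∞)`. -/
def Hf5 (f : ℝ → ℝ) (β : ℝ) : Prop := AntitoneOn (fun s => s * deriv f s / f s) (Ici β)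

/-- Hypothesis (f6): `β f' β / f β ≤ n/(n-2)`. -/
def Hf6 (n : ℕ) (f : ℝ → ℝ) (β : ℝ) : Prop := β * deriv f β / f β ≤ (n : ℝ) / ((n : ℝ) - 2)

/-- Hypothesis (f1'): `f 0 = 0` and `s f s > 0` for `s > 0`. -/
def Hf1' (f : ℝ → ℝ) : Prop := f 0 = 0 ∧ ∀ s : ℝ, 0 < s → 0 < s * f s

/-- Hypothesis (f3'): `f s ≥ s f' s` for `s > 0`, with strict inequality at points
arbitrarily close to `0`. -/
def Hf3' (f : ℝ → ℝ) : Prop :=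
  (∀ s : ℝ, 0 < s → s * deriv f s ≤ f s) ∧
    ∀ ε : ℝ, 0 < ε → ∃ s ∈ Ioo (0:ℝ) ε, s * deriv f s < f s

/-- `v` is a C² solution of (E) on `(0,∞)`, continuous on `[0,∞)`,
with `v 0 = α` and `v' 0 = 0`. -/
def IVPsol (n : ℕ) (f : ℝ → ℝ) (α : ℝ) (v : ℝ → ℝ) : Prop :=
  v 0 = α ∧ deriv v 0 = 0 ∧ ContinuousOn v (Ici 0) ∧
    (∀ r : ℝ, 0 < r → DifferentiableAt ℝ v r ∧ DifferentiableAt ℝ (deriv v) r) ∧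
    (∀ r : ℝ, 0 < r → deriv (deriv v) r + ((n : ℝ) - 1) / r * deriv v r + f (v r) = 0)

/-- The family `α ↦ u α` of solutions of the IVP, with `u α r` and `u' α r`
continuous in `(α, r)`. -/
def Family (n : ℕ) (f : ℝ → ℝ) (u : ℝ → ℝ → ℝ) : Prop :=
  (∀ α : ℝ, 0 < α → IVPsol n f α (u α)) ∧
    ContinuousOn (fun p : ℝ × ℝ => u p.1 p.2) (Ioi 0 ×ˢ Ici 0) ∧
    ContinuousOn (fun p : ℝ × ℝ => deriv (u p.1) p.2) (Ioi 0 ×ˢ Ici 0)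

/-- The set whose supremum is `Z_k α`, given `T = T_{k-1} α`. -/
def ZsetAux (u : ℝ → ℝ → ℝ) (k : ℕ) (T α : ℝ) : Set ℝ :=
  {r | T < r ∧ ∀ s ∈ Ioo T r, (-1 : ℝ) ^ k * u α s < 0 ∧ 0 < (-1 : ℝ) ^ k * deriv (u α) s}

/-- The pair `(Z_k, T_k)`, with `T₀ = 0`;
`Z_k α = sup {r > T_{k-1} α | (-1)^k u < 0, (-1)^k u' > 0 on (T_{k-1} α, r)}` and
`T_k α = inf {r > Z_k α | u'(r, α) = 0}`. -/
def ZT (u : ℝ → ℝ → ℝ) : ℕ → (ℝ → ℝ) × (ℝ → ℝ)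
  | 0 => (fun _ => 0, fun _ => 0)
  | k + 1 =>
    let Z : ℝ → ℝ := fun α => sSup (ZsetAux u (k + 1) ((ZT u k).2 α) α)
    (Z, fun α => sInf {r | Z α < r ∧ deriv (u α) r = 0})

/-- `Z_k α` (as a real number; the genuine value when the defining set is bounded above). -/
def Zk (u : ℝ → ℝ → ℝ) (k : ℕ) (α : ℝ) : ℝ := (ZT u k).1 α

/-- `T_k α`, with `T₀ = 0`. -/
def Tk (u : ℝ → ℝ → ℝ) (k : ℕ) (α : ℝ) : ℝ := (ZT u k).2 α

/-- The defining set of `Z_k α`; `Z_k α = ∞` iff this set is unbounded above. -/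
def ZsetK (u : ℝ → ℝ → ℝ) (k : ℕ) (α : ℝ) : Set ℝ := ZsetAux u k (Tk u (k - 1) α) α

open Classical in
/-- The value of `u (·, α)` at `Z_k α`, as a limit `r → ∞` when `Z_k α = ∞`. -/
def uAtZ (u : ℝ → ℝ → ℝ) (k : ℕ) (α : ℝ) : ℝ :=
  if BddAbove (ZsetK u k α) then u α (Zk u k α) else limUnder atTop (u α)

open Classical in
/-- The value of `u' (·, α)` at `Z_k α`, as a limit `r → ∞` when `Z_k α = ∞`. -/
def duAtZ (u : ℝ → ℝ → ℝ) (k : ℕ) (α : ℝ) : ℝ :=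
  if BddAbove (ZsetK u k α) then deriv (u α) (Zk u k α) else limUnder atTop (deriv (u α))

open Classical in
/-- `Z_k α` as an extended real number. -/
def ZkE (u : ℝ → ℝ → ℝ) (k : ℕ) (α : ℝ) : WithTop ℝ :=
  if BddAbove (ZsetK u k α) then (Zk u k α : WithTop ℝ) else ⊤

/-- Membership in `F̃_k` (for `α ∈ N_{k-1}`): `(-1)^k u' (r, α) < 0` for all `r > Z_{k-1} α`. -/
def Ftil (u : ℝ → ℝ → ℝ) (k : ℕ) (α : ℝ) : Prop :=
  ∀ r, Zk u (k - 1) α < r → (-1 : ℝ) ^ k * deriv (u α) r < 0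

/-- The sets `N_k` (with `N₀ := (0,∞)`). -/
def Nk (u : ℝ → ℝ → ℝ) : ℕ → Set ℝ
  | 0 => Ioi 0
  | 1 => {α | 0 < α ∧ uAtZ u 1 α = 0 ∧ duAtZ u 1 α < 0}
  | k + 2 => {α | α ∈ Nk u (k + 1) ∧ ¬Ftil u (k + 2) α ∧ uAtZ u (k + 2) α = 0 ∧
      0 < (-1 : ℝ) ^ (k + 2) * duAtZ u (k + 2) α}

/-- The sets `G_k`. -/
def Gk (u : ℝ → ℝ → ℝ) : ℕ → Set ℝ
  | 0 => ∅
  | 1 => {α | 0 < α ∧ uAtZ u 1 α = 0 ∧ duAtZ u 1 α = 0}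
  | k + 2 => {α | α ∈ Nk u (k + 1) ∧ ¬Ftil u (k + 2) α ∧ uAtZ u (k + 2) α = 0 ∧
      duAtZ u (k + 2) α = 0}

/-- The set `F̃_k` (for `k ≥ 2`). -/
def FtilSet (u : ℝ → ℝ → ℝ) (k : ℕ) : Set ℝ := {α | α ∈ Nk u (k - 1) ∧ Ftil u k α}

/-- The set `F_k` (for `k ≥ 2`). -/
def Fk (u : ℝ → ℝ → ℝ) (k : ℕ) : Set ℝ :=
  {α | α ∈ Nk u (k - 1) ∧ ¬Ftil u k α ∧ (-1 : ℝ) ^ k * uAtZ u k α < 0}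

/-- The sets `P_k`. -/
def Pk (u : ℝ → ℝ → ℝ) : ℕ → Set ℝ
  | 0 => ∅
  | 1 => {α | 0 < α ∧ 0 < uAtZ u 1 α}
  | k + 2 => FtilSet u (k + 2) ∪ Fk u (k + 2)

/-- The set of extremal points (zeros of `u' (·, α)`) in `[0, A]`. -/
def ExtSet (u : ℝ → ℝ → ℝ) (α A : ℝ) : Set ℝ := {r | r ∈ Icc 0 A ∧ deriv (u α) r = 0}

/-- The conclusion of the δ₁-lemma (Lemma 4.1): every solution with initial value in
`(α*-δ₁, α*+δ₁)` has exactly `k` extremal points in `[0, T_{k-1}(α*) + a]`, with minimum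
values `< -β` and maximum values `> β`; moreover any two such solutions intersect between
any two of their consecutive extremal points, and in `(T_{k-1}(α*), Z_k(α*))`. -/
def DeltaOneLemma (f : ℝ → ℝ) (β : ℝ) (u : ℝ → ℝ → ℝ) (k : ℕ) (αs a δ₁ : ℝ) : Prop :=
  0 < a ∧ 0 < δ₁ ∧
    (∀ α ∈ Ioo (αs - δ₁) (αs + δ₁),
      (ExtSet u α (Tk u (k - 1) αs + a)).Finite ∧
        (ExtSet u α (Tk u (k - 1) αs + a)).ncard = k ∧
        ∀ r ∈ ExtSet u α (Tk u (k - 1) αs + a),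
          (IsLocalMin (u α) r → u α r < -β) ∧ (IsLocalMax (u α) r → β < u α r)) ∧
    ∀ α₁ ∈ Ioo (αs - δ₁) (αs + δ₁), ∀ α₂ ∈ Ioo (αs - δ₁) (αs + δ₁), α₁ < α₂ →
      (∀ i : ℕ, 1 ≤ i → i ≤ k - 1 →
        ∃ t, max (Tk u (i - 1) α₁) (Tk u (i - 1) α₂) < t ∧
          t < min (Tk u i α₁) (Tk u i α₂) ∧ u α₁ t = u α₂ t) ∧
      ∃ t, Tk u (k - 1) αs < t ∧ (BddAbove (ZsetK u k αs) → t < Zk u k αs) ∧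
        u α₁ t = u α₂ t

/-- `ρ` is the inverse of the monotone branch of `v` on `[t₁, t₂]`, whose set of values
is `[m, M]`. -/
def InvBranch (v ρ : ℝ → ℝ) (t₁ t₂ m M : ℝ) : Prop :=
  (∀ s ∈ Icc m M, ρ s ∈ Icc t₁ t₂ ∧ v (ρ s) = s) ∧
    ∀ s ∈ Ioo m M, HasDerivAt ρ (1 / deriv v (ρ s)) s

/-- `ρ` inverts a decreasing branch of `v` over the value interval `[m, M]`, along which
`(v')² + 2F > 0`. -/
def DecBranchInv (f : ℝ → ℝ) (v ρ : ℝ → ℝ) (m M : ℝ) : Prop :=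
  ∀ s ∈ Icc m M, 0 ≤ ρ s ∧ v (ρ s) = s ∧ deriv v (ρ s) < 0 ∧
    HasDerivAt ρ (1 / deriv v (ρ s)) s ∧ 0 < (deriv v (ρ s)) ^ 2 + 2 * Fint f s

/-- The functional `Q(s) = -4 (F/f)(s) r/r' - r²/(r')² - 2 r² F(s) + H(s)` computed along
the branch inverse `ρ`. -/
def Qfun (f H ρ : ℝ → ℝ) (s : ℝ) : ℝ :=
  -4 * (Fint f s / f s) * (ρ s / deriv ρ s) - (ρ s) ^ 2 / (deriv ρ s) ^ 2 -
    2 * (ρ s) ^ 2 * Fint f s + H s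

/-- The functional `P(s) = -2n (F/f)(s) r^{n-1}/r' - r^n/(r')² - 2 r^n F(s)`. -/
def Pfun (n : ℕ) (f : ℝ → ℝ) (ρ : ℝ → ℝ) (s : ℝ) : ℝ :=
  -(2 * (n : ℝ)) * (Fint f s / f s) * (ρ s ^ (n - 1) / deriv ρ s) -
    ρ s ^ n / (deriv ρ s) ^ 2 - 2 * ρ s ^ n * Fint f s

/-- The functional `W(s) = r(s) √((u'(r(s)))² + 2 F(s))`. -/
def Wfun (f v ρ : ℝ → ℝ) (s : ℝ) : ℝ :=
  ρ s * Real.sqrt ((deriv v (ρ s)) ^ 2 + 2 * Fint f s)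

/-- The functional `W̃(s) = r(s)^{n-1} √((u'(r(s)))² + 2 F(s))`. -/
def Wtil (n : ℕ) (f : ℝ → ℝ) (v ρ : ℝ → ℝ) (s : ℝ) : ℝ :=
  ρ s ^ (n - 1) * Real.sqrt ((deriv v (ρ s)) ^ 2 + 2 * Fint f s)

/-- `v` changes sign at `z ∈ (0,∞)`: `v z = 0` and `v` takes both signs in every
neighborhood of `z` (within `(0,∞)`). -/
def SignChange (v : ℝ → ℝ) (z : ℝ) : Prop :=
  v z = 0 ∧ ∀ ε : ℝ, 0 < ε →
    (∃ x ∈ Ioo (z - ε) (z + ε) ∩ Ioi 0, 0 < v x) ∧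
    (∃ x ∈ Ioo (z - ε) (z + ε) ∩ Ioi 0, v x < 0)

/-- `v` has exactly `m` sign changes in `(0,∞)`. -/
def ExactSignChanges (v : ℝ → ℝ) (m : ℕ) : Prop :=
  {z | 0 < z ∧ SignChange v z}.Finite ∧ {z | 0 < z ∧ SignChange v z}.ncard = m

/-- Bound state: a C² solution of (E) on `(0,∞)` with `v' 0 = 0` and `v r → 0` as `r → ∞`. -/
def BoundState (n : ℕ) (f : ℝ → ℝ) (v : ℝ → ℝ) : Prop :=
  ContinuousOn v (Ici 0) ∧
    (∀ r : ℝ, 0 < r → DifferentiableAt ℝ v r ∧ DifferentiableAt ℝ (deriv v) r) ∧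
    (∀ r : ℝ, 0 < r → deriv (deriv v) r + ((n : ℝ) - 1) / r * deriv v r + f (v r) = 0) ∧
    deriv v 0 = 0 ∧ Tendsto v atTop (nhds 0)

/-- Solution of the Dirichlet problem on the ball of radius `R`. -/
def DirichletSol (n : ℕ) (f : ℝ → ℝ) (R : ℝ) (v : ℝ → ℝ) : Prop :=
  ContinuousOn v (Icc 0 R) ∧
    (∀ r ∈ Ioo (0:ℝ) R, DifferentiableAt ℝ v r ∧ DifferentiableAt ℝ (deriv v) r) ∧
    (∀ r ∈ Ioo (0:ℝ) R, deriv (deriv v) r + ((n : ℝ) - 1) / r * deriv v r + f (v r) = 0) ∧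
    deriv v 0 = 0 ∧ v R = 0

end
end Paper

open Paper Set Filter MeasureTheory

open Topology

/-!
Write `v = u(·, α)`, `d = n - 1`, and consider the weighted Wronskian `W = r ^ d (v' φ' - v'' φ)`
of `v'` and `φ`. Since `v'` satisfies the linearized equation up to the term `d v' / r ^ 2`, one
finds `W' = -d r ^ (d - 2) v' φ`. If `φ` had no zero in `(T, Z)` we could choose its sign so that
`v' φ < 0` there. Then `W` increases strictly, and its limit at `T` is `0` if `T = 0` and
`-T ^ d v''(T) φ(T) ≥ 0` otherwise, so `W > 0` on `(T, Z]`. At a finite double zero of `v` this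
contradicts `W(Z) = 0`. If `Z = ∞`, then `v f(v) ≤ 0` for large `r` gives `(r ^ d v' φ)' ≥ W`, which
stays above a positive constant, so the negative function `r ^ d v' φ` would tend to `+∞`.
-/

namespace Paper

/-! ### Real functions -/

theorem eq_zero_of_eventually_mul_nonpos {f : ℝ → ℝ} (hf : ContinuousAt f 0)
    (h : ∀ᶠ s in 𝓝 0, s * f s ≤ 0) : f 0 = 0 := by
  apply le_antisymm
  · refine le_of_tendsto (hf.mono_left (nhdsWithin_le_nhds (s := Ioi 0))) ?_
    filter_upwards [h.filter_mono nhdsWithin_le_nhds, self_mem_nhdsWithin] with s hs hs0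
    exact nonpos_of_mul_nonpos_right hs hs0
  · refine ge_of_tendsto (hf.mono_left (nhdsWithin_le_nhds (s := Iio 0))) ?_
    filter_upwards [h.filter_mono nhdsWithin_le_nhds, self_mem_nhdsWithin] with s hs hs0
    exact nonneg_of_mul_nonpos_right hs hs0

theorem differentiableAt_of_odd {f : ℝ → ℝ} (hodd : ∀ s, f (-s) = -f s)
    (hf : ∀ s : ℝ, 0 < s → DifferentiableAt ℝ f s) {s : ℝ} (hs : s ≠ 0) :
    DifferentiableAt ℝ f s := by
  rcases hs.lt_or_gt with hneg | hpos
  · have hreflect : f = fun x => -f (-x) := funext fun x => by rw [hodd, neg_neg]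
    rw [hreflect]
    exact ((hf (-s) (neg_pos.2 hneg)).comp s differentiableAt_id.neg).neg
  · exact hf s hpos

theorem exists_tendsto_of_deriv_pos {w : ℝ → ℝ} {T B : ℝ} (hw : ∀ s, T < s → 0 < deriv w s)
    (hB : ∀ s, T < s → w s ≤ B) : ∃ l, Tendsto w atTop (𝓝 l) := by
  have hmono : StrictMonoOn w (Ioi T) := by
    refine strictMonoOn_of_deriv_pos (convex_Ioi T) (fun s hs => ?_)
      fun s hs => hw s (interior_subset hs)
    exact (differentiableAt_of_deriv_ne_zero (hw s hs).ne').continuousAt.continuousWithinAt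
  have hmem (r : ℝ) : T < max r (T + 1) := (lt_add_one T).trans_le (le_max_right _ _)
  have hext : Monotone fun r => w (max r (T + 1)) := fun x y hxy =>
    hmono.monotoneOn (hmem x) (hmem y) (max_le_max_right _ hxy)
  refine ⟨_, (tendsto_atTop_ciSup hext ⟨B, ?_⟩).congr' ?_⟩
  · rintro _ ⟨r, rfl⟩
    exact hB _ (hmem r)
  · filter_upwards [eventually_ge_atTop (T + 1)] with r hr
    rw [max_eq_left hr]

theorem exists_nonneg_of_forall_le_deriv {g : ℝ → ℝ} {R c : ℝ} (hc : 0 < c)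
    (hg : ∀ r, R ≤ r → c ≤ deriv g r) : ∃ r, R ≤ r ∧ 0 ≤ g r := by
  have hdiff (r : ℝ) (hr : R ≤ r) : DifferentiableAt ℝ g r :=
    differentiableAt_of_deriv_ne_zero (hc.trans_le (hg r hr)).ne'
  set r := R + |g R| / c
  have hr : R ≤ r := le_add_of_nonneg_right (by positivity)
  have hgrowth : c * (r - R) ≤ g r - g R :=
    (convex_Ici R).mul_sub_le_image_sub_of_le_deriv
      (fun s hs => (hdiff s hs).continuousAt.continuousWithinAt)
      (fun s hs => (hdiff s (interior_subset hs)).differentiableWithinAt)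
      (fun s hs => hg s (interior_subset hs)) R self_mem_Ici r hr hr
  have hstep : c * (r - R) = |g R| := by
    simp only [r, add_sub_cancel_left]
    field_simp
  exact ⟨r, hr, by linarith [neg_abs_le (g R)]⟩

theorem eventually_abs_le_of_eventually_abs_deriv_le {g g' : ℝ → ℝ} {a K : ℝ}
    (hg : ∀ᶠ r in 𝓝[>] a, HasDerivAt g (g' r) r ∧ |g' r| ≤ K) :
    ∃ C, ∀ᶠ r in 𝓝[>] a, |g r| ≤ C := by
  obtain ⟨e, he, hsub⟩ := mem_nhdsGT_iff_exists_Ioc_subset.1 hg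
  refine ⟨|g e| + K * (e - a), ?_⟩
  filter_upwards [Ioc_mem_nhdsGT he] with r hr
  have hlip : |g e - g r| ≤ K * |e - r| :=
    (convex_Ioc a e).norm_image_sub_le_of_norm_hasDerivWithin_le
      (fun x hx => (hsub hx).1.hasDerivWithinAt) (fun x hx => (hsub hx).2) hr ⟨he, le_rfl⟩
  have hK : 0 ≤ K := (abs_nonneg _).trans (hsub hr).2
  have hdist : |e - r| ≤ e - a := by
    rw [abs_of_nonneg (sub_nonneg.2 hr.2)]
    linarith [hr.1]
  calc |g r| ≤ |g e| + |g e - g r| := by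
        linarith [abs_sub_abs_le_abs_sub (g r) (g e), abs_sub_comm (g r) (g e)]
    _ ≤ |g e| + K * (e - a) := by gcongr; exact hlip.trans (by gcongr)

theorem hasDerivAt_rpow_mul {g : ℝ → ℝ} {g' r : ℝ} (d : ℝ) (hr : 0 < r)
    (hg : HasDerivAt g g' r) :
    HasDerivAt (fun x => x ^ d * g x) (r ^ d * (g' + d / r * g r)) r := by
  refine ((Real.hasDerivAt_rpow_const (Or.inl hr.ne')).mul hg).congr_deriv ?_
  rw [Real.rpow_sub_one hr.ne']
  ring

theorem tendsto_rpow_nhdsGT_zero {d : ℝ} (hd : 0 < d) :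
    Tendsto (fun r : ℝ => r ^ d) (𝓝[>] 0) (𝓝 0) := by
  simpa only [Real.zero_rpow hd.ne'] using
    (Real.continuousAt_rpow_const 0 d (Or.inr hd.le)).tendsto.mono_left nhdsWithin_le_nhds

/-! ### The radial equation and its linearization -/

/-- `v` is a regular solution of `v'' + (d / r) v' + f(v) = 0` on `(0, ∞)`: it is continuous at the
origin, where `v' → 0`. Here `d` is one less than the dimension, and is allowed to be real. -/
structure RadialSolution (d : ℝ) (f v : ℝ → ℝ) : Prop where
  differentiableAt : ∀ r, 0 < r → DifferentiableAt ℝ v r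
  differentiableAt_deriv : ∀ r, 0 < r → DifferentiableAt ℝ (deriv v) r
  eqn : ∀ r, 0 < r → deriv (deriv v) r + d / r * deriv v r + f (v r) = 0
  tendsto_zero : Tendsto v (𝓝[>] 0) (𝓝 (v 0))
  tendsto_deriv_zero : Tendsto (deriv v) (𝓝[>] 0) (𝓝 0)

/-- `φ` solves the linearization of the radial equation around `v` wherever `v` does not vanish
(`f` need not be differentiable at `0`), and is continuous at the origin. -/
structure LinearizedSolution (d : ℝ) (f v φ : ℝ → ℝ) : Prop where
  differentiableAt : ∀ r, 0 < r → DifferentiableAt ℝ φ r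
  differentiableAt_deriv : ∀ r, 0 < r → DifferentiableAt ℝ (deriv φ) r
  eqn : ∀ r, 0 < r → v r ≠ 0 →
    deriv (deriv φ) r + d / r * deriv φ r + deriv f (v r) * φ r = 0
  tendsto_zero : Tendsto φ (𝓝[>] 0) (𝓝 (φ 0))

/-- The weighted Wronskian `r ^ d (v' φ' - v'' φ)` of `v'` and `φ`, with `v''` eliminated by the
radial equation, so that it can be differentiated without a third derivative of `v`. -/
noncomputable def wronskian (d : ℝ) (f v φ : ℝ → ℝ) (r : ℝ) : ℝ :=
  r ^ d * (deriv v r * deriv φ r + (d / r * deriv v r + f (v r)) * φ r)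

section Solutions

variable {d : ℝ} {f v φ : ℝ → ℝ}

theorem LinearizedSolution.neg (hφ : LinearizedSolution d f v φ) :
    LinearizedSolution d f v (fun r => -φ r) where
  differentiableAt r hr := (hφ.differentiableAt r hr).neg
  differentiableAt_deriv r hr := by
    rw [deriv.fun_neg']
    exact (hφ.differentiableAt_deriv r hr).neg
  eqn r hr hvr := by
    rw [deriv.fun_neg', deriv.fun_neg]
    linear_combination -hφ.eqn r hr hvr
  tendsto_zero := hφ.tendsto_zero.neg

theorem LinearizedSolution.hasDerivAt_rpow_mul_deriv (hφ : LinearizedSolution d f v φ) {r : ℝ}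
    (hr : 0 < r) (hvr : v r ≠ 0) :
    HasDerivAt (fun x => x ^ d * deriv φ x) (-(r ^ d * (deriv f (v r) * φ r))) r := by
  refine (hasDerivAt_rpow_mul d hr (hφ.differentiableAt_deriv r hr).hasDerivAt).congr_deriv ?_
  linear_combination r ^ d * hφ.eqn r hr hvr

namespace RadialSolution

theorem hasDerivAt_rpow_mul_deriv (hv : RadialSolution d f v) {r : ℝ} (hr : 0 < r) :
    HasDerivAt (fun x => x ^ d * deriv v x) (-(r ^ d * f (v r))) r := by
  refine (hasDerivAt_rpow_mul d hr (hv.differentiableAt_deriv r hr).hasDerivAt).congr_deriv ?_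
  linear_combination r ^ d * hv.eqn r hr

theorem hasDerivAt_wronskian (hv : RadialSolution d f v) (hφ : LinearizedSolution d f v φ) {r : ℝ}
    (hr : 0 < r) (hvr : v r ≠ 0) (hf : DifferentiableAt ℝ f (v r)) :
    HasDerivAt (wronskian d f v φ) (-(r ^ d * (d / r ^ 2 * (deriv v r * φ r)))) r := by
  have hv₁ := (hv.differentiableAt r hr).hasDerivAt
  have hv₂ := (hv.differentiableAt_deriv r hr).hasDerivAt
  have hφ₁ := (hφ.differentiableAt r hr).hasDerivAt
  have hφ₂ := (hφ.differentiableAt_deriv r hr).hasDerivAt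
  have hdiv : HasDerivAt (fun x => d / x) (-d / r ^ 2) r := by
    simpa [div_eq_mul_inv] using (hasDerivAt_inv hr.ne').const_mul d
  have hW := hasDerivAt_rpow_mul d hr
    ((hv₂.mul hφ₂).add (((hdiv.mul hv₂).add (hf.hasDerivAt.comp r hv₁)).mul hφ₁))
  refine hW.congr_deriv ?_
  simp only [Function.comp_apply, Pi.mul_apply, Pi.add_apply]
  linear_combination r ^ d * ((deriv φ r + d / r * φ r) * hv.eqn r hr +
    deriv v r * hφ.eqn r hr hvr)

theorem continuousAt_wronskian (hv : RadialSolution d f v) (hφ : LinearizedSolution d f v φ)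
    (hf : Continuous f) {r : ℝ} (hr : 0 < r) : ContinuousAt (wronskian d f v φ) r := by
  have hv₁ := (hv.differentiableAt r hr).continuousAt
  have hv₂ := (hv.differentiableAt_deriv r hr).continuousAt
  have hφ₁ := (hφ.differentiableAt r hr).continuousAt
  have hφ₂ := (hφ.differentiableAt_deriv r hr).continuousAt
  have hpow := Real.continuousAt_rpow_const r d (Or.inl hr.ne')
  have hdiv : ContinuousAt (fun x => d / x) r := continuousAt_const.div continuousAt_id hr.ne'
  exact hpow.mul ((hv₂.mul hφ₂).add (((hdiv.mul hv₂).add (hf.continuousAt.comp hv₁)).mul hφ₁))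

/-! ### The limit of the Wronskian at the left endpoint -/

theorem tendsto_rpow_mul_deriv_div (hv : RadialSolution d f v) (hd : 0 < d) (hf : Continuous f) :
    Tendsto (fun r => r ^ d * deriv v r / r) (𝓝[>] 0) (𝓝 0) := by
  have hcont : ContinuousWithinAt (fun r => r ^ d * deriv v r) (Ioi 0) 0 := by
    simpa [ContinuousWithinAt, Real.zero_rpow hd.ne'] using
      (tendsto_rpow_nhdsGT_zero hd).mul hv.tendsto_deriv_zero
  have hsource : Tendsto (fun r => -(r ^ d * f (v r))) (𝓝[>] 0) (𝓝 0) := by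
    simpa using ((tendsto_rpow_nhdsGT_zero hd).mul ((hf.tendsto _).comp hv.tendsto_zero)).neg
  have hderiv : HasDerivWithinAt (fun r => r ^ d * deriv v r) 0 (Ici 0) 0 := by
    refine hasDerivWithinAt_Ici_of_tendsto_deriv (fun r hr =>
      (hv.hasDerivAt_rpow_mul_deriv hr).differentiableAt.differentiableWithinAt) hcont
      self_mem_nhdsWithin (hsource.congr' ?_)
    filter_upwards [self_mem_nhdsWithin] with r hr
    exact (hv.hasDerivAt_rpow_mul_deriv hr).deriv.symm
  have hslope := (hasDerivWithinAt_iff_tendsto_slope' (s := Ioi 0) self_notMem_Ioi).1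
    (hderiv.mono Ioi_subset_Ici_self)
  simpa [slope_fun_def_field, Real.zero_rpow hd.ne'] using hslope

theorem eventually_abs_rpow_mul_deriv_linearized_le (hv : RadialSolution d f v)
    (hφ : LinearizedSolution d f v φ) (hd : 0 < d) (hv0 : v 0 ≠ 0)
    (hf' : ContinuousAt (deriv f) (v 0)) :
    ∃ C, ∀ᶠ r in 𝓝[>] 0, |r ^ d * deriv φ r| ≤ C := by
  have hsource : Tendsto (fun r => |-(r ^ d * (deriv f (v r) * φ r))|) (𝓝[>] 0) (𝓝 0) := by
    simpa using ((tendsto_rpow_nhdsGT_zero hd).mul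
      ((hf'.tendsto.comp hv.tendsto_zero).mul hφ.tendsto_zero)).neg.abs
  refine eventually_abs_le_of_eventually_abs_deriv_le
    (g' := fun r => -(r ^ d * (deriv f (v r) * φ r))) (K := 1) ?_
  filter_upwards [self_mem_nhdsWithin, hv.tendsto_zero.eventually_ne hv0,
    hsource.eventually_le_const zero_lt_one] with r hr hvr hle
  exact ⟨hφ.hasDerivAt_rpow_mul_deriv hr hvr, hle⟩

theorem tendsto_wronskian_zero (hv : RadialSolution d f v) (hφ : LinearizedSolution d f v φ)
    (hd : 0 < d) (hf : Continuous f) (hv0 : v 0 ≠ 0) (hf' : ContinuousAt (deriv f) (v 0)) :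
    Tendsto (wronskian d f v φ) (𝓝[>] 0) (𝓝 0) := by
  obtain ⟨C, hC⟩ := hv.eventually_abs_rpow_mul_deriv_linearized_le hφ hd hv0 hf'
  have hderivs : Tendsto (fun r => r ^ d * deriv φ r * deriv v r) (𝓝[>] 0) (𝓝 0) :=
    bdd_le_mul_tendsto_zero' C hC hv.tendsto_deriv_zero
  have hdrift : Tendsto (fun r => d * (r ^ d * deriv v r / r) * φ r) (𝓝[>] 0) (𝓝 0) := by
    simpa using ((hv.tendsto_rpow_mul_deriv_div hd hf).const_mul d).mul hφ.tendsto_zero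
  have hsource : Tendsto (fun r => r ^ d * f (v r) * φ r) (𝓝[>] 0) (𝓝 0) := by
    simpa using ((tendsto_rpow_nhdsGT_zero hd).mul ((hf.tendsto _).comp hv.tendsto_zero)).mul
      hφ.tendsto_zero
  have hsum := (hderivs.add hdrift).add hsource
  simp only [add_zero] at hsum
  refine hsum.congr fun r => ?_
  rw [wronskian]
  ring

theorem wronskian_nonneg_of_deriv_eq_zero (hv : RadialSolution d f v)
    (hφ : LinearizedSolution d f v φ) {T : ℝ} (hT : 0 < T) (hcrit : deriv v T = 0)
    (hneg : ∀ᶠ s in 𝓝[>] T, deriv v s * φ s < 0) : 0 ≤ wronskian d f v φ T := by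
  have hslope : Tendsto (slope (deriv v) T) (𝓝[>] T) (𝓝 (deriv (deriv v) T)) :=
    (hasDerivWithinAt_iff_tendsto_slope' self_notMem_Ioi).1
      (hv.differentiableAt_deriv T hT).hasDerivAt.hasDerivWithinAt
  have hφT : Tendsto φ (𝓝[>] T) (𝓝 (φ T)) :=
    (hφ.differentiableAt T hT).continuousAt.tendsto.mono_left nhdsWithin_le_nhds
  have hsecond : deriv (deriv v) T * φ T ≤ 0 := by
    refine le_of_tendsto (hslope.mul hφT) ?_
    filter_upwards [hneg, self_mem_nhdsWithin] with s hs hTs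
    rw [slope_def_field, hcrit, sub_zero, div_mul_eq_mul_div]
    exact div_nonpos_of_nonpos_of_nonneg hs.le (sub_nonneg.2 (le_of_lt hTs))
  have hW : wronskian d f v φ T = T ^ d * -(deriv (deriv v) T * φ T) := by
    rw [wronskian, hcrit]
    linear_combination T ^ d * φ T * (hv.eqn T hT) - T ^ d * φ T * (d / T) * hcrit
  rw [hW]
  exact mul_nonneg (Real.rpow_nonneg hT.le d) (neg_nonneg.2 hsecond)

theorem exists_nonneg_tendsto_wronskian (hv : RadialSolution d f v)
    (hφ : LinearizedSolution d f v φ) (hd : 0 < d) (hf : Continuous f) (hv0 : v 0 ≠ 0)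
    (hf' : ContinuousAt (deriv f) (v 0)) {T : ℝ} (hT : 0 ≤ T) (hcrit : 0 < T → deriv v T = 0)
    (hneg : ∀ᶠ s in 𝓝[>] T, deriv v s * φ s < 0) :
    ∃ L, 0 ≤ L ∧ Tendsto (wronskian d f v φ) (𝓝[>] T) (𝓝 L) := by
  rcases hT.eq_or_lt with rfl | hT
  · exact ⟨0, le_rfl, hv.tendsto_wronskian_zero hφ hd hf hv0 hf'⟩
  · exact ⟨_, hv.wronskian_nonneg_of_deriv_eq_zero hφ hT (hcrit hT) hneg,
      (hv.continuousAt_wronskian hφ hf hT).mono_left nhdsWithin_le_nhds⟩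

/-! ### Growth of the Wronskian -/

theorem strictMonoOn_wronskian (hv : RadialSolution d f v) (hφ : LinearizedSolution d f v φ)
    (hd : 0 < d) (hf : Continuous f) (hfd : ∀ s, s ≠ 0 → DifferentiableAt ℝ f s) {S : Set ℝ}
    (hS : Convex ℝ S) (hS0 : S ⊆ Ioi 0) (hne : ∀ s ∈ interior S, v s ≠ 0)
    (hneg : ∀ s ∈ interior S, deriv v s * φ s < 0) : StrictMonoOn (wronskian d f v φ) S := by
  refine strictMonoOn_of_deriv_pos hS
    (fun s hs => (hv.continuousAt_wronskian hφ hf (hS0 hs)).continuousWithinAt) fun s hs => ?_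
  have hs0 : 0 < s := hS0 (interior_subset hs)
  rw [(hv.hasDerivAt_wronskian hφ hs0 (hne s hs) (hfd _ (hne s hs))).deriv, ← mul_neg, ← mul_neg]
  have := neg_pos.2 (hneg s hs)
  positivity

theorem wronskian_pos (hv : RadialSolution d f v) (hφ : LinearizedSolution d f v φ)
    (hd : 0 < d) (hf : Continuous f) (hfd : ∀ s, s ≠ 0 → DifferentiableAt ℝ f s) {T r : ℝ}
    (hT : 0 ≤ T) (hTr : T < r) (hne : ∀ s ∈ Ioo T r, v s ≠ 0)
    (hneg : ∀ s ∈ Ioo T r, deriv v s * φ s < 0)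
    (hstart : ∃ L, 0 ≤ L ∧ Tendsto (wronskian d f v φ) (𝓝[>] T) (𝓝 L)) :
    0 < wronskian d f v φ r := by
  have hmono : StrictMonoOn (wronskian d f v φ) (Ioc T r) :=
    hv.strictMonoOn_wronskian hφ hd hf hfd (convex_Ioc T r) (fun s hs => hT.trans_lt hs.1)
      (by rwa [interior_Ioc]) (by rwa [interior_Ioc])
  obtain ⟨L, hL, hlim⟩ := hstart
  obtain ⟨q, hTq, hqr⟩ := exists_between hTr
  have hLq : L ≤ wronskian d f v φ q := by
    refine le_of_tendsto hlim ?_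
    filter_upwards [Ioo_mem_nhdsGT hTq] with s hs
    exact (hmono ⟨hs.1, (hs.2.trans hqr).le⟩ ⟨hTq, hqr.le⟩ hs.2).le
  exact (hL.trans hLq).trans_lt (hmono ⟨hTq, hqr.le⟩ ⟨hTr, le_rfl⟩ hqr)

theorem exists_nonneg_deriv_mul_of_le_wronskian (hv : RadialSolution d f v)
    (hφ : LinearizedSolution d f v φ) (hd : 0 < d) {R c : ℝ} (hR : 0 < R) (hc : 0 < c)
    (hfφ : ∀ r, R ≤ r → f (v r) * φ r ≤ 0) (hW : ∀ r, R ≤ r → c ≤ wronskian d f v φ r) :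
    ∃ r, R ≤ r ∧ 0 ≤ deriv v r * φ r := by
  by_contra! hneg
  have hderiv (r : ℝ) (hr : R ≤ r) : c ≤ deriv (fun x => x ^ d * (deriv v x * φ x)) r := by
    have hr0 : 0 < r := hR.trans_le hr
    have hG := hasDerivAt_rpow_mul d hr0 ((hv.differentiableAt_deriv r hr0).hasDerivAt.mul
      (hφ.differentiableAt r hr0).hasDerivAt)
    have hexcess : 0 ≤ r ^ d * (-2 * (f (v r) * φ r) + d / r * -(deriv v r * φ r)) := by
      have h₁ := hfφ r hr
      have h₂ := neg_pos.2 (hneg r hr)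
      have h₃ : 0 ≤ -2 * (f (v r) * φ r) := by linarith
      positivity
    calc c ≤ wronskian d f v φ r := hW r hr
      _ ≤ wronskian d f v φ r + r ^ d * (-2 * (f (v r) * φ r) + d / r * -(deriv v r * φ r)) :=
        le_add_of_nonneg_right hexcess
      _ = deriv (fun x => x ^ d * (deriv v x * φ x)) r := by
        refine Eq.trans ?_ hG.deriv.symm
        simp only [wronskian, Pi.mul_apply]
        linear_combination -(r ^ d * φ r) * hv.eqn r hr0
  obtain ⟨r, hr, hnonneg⟩ := exists_nonneg_of_forall_le_deriv hc hderiv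
  exact (mul_neg_of_pos_of_neg (Real.rpow_pos_of_pos (hR.trans_le hr) d) (hneg r hr)).not_ge hnonneg

/-! ### The sign of `v' φ` on an interval where `|v|` decreases to a double zero -/

theorem exists_nonneg_deriv_mul_of_double_zero (hv : RadialSolution d f v)
    (hφ : LinearizedSolution d f v φ) (hd : 0 < d) (hf : Continuous f)
    (hfd : ∀ s, s ≠ 0 → DifferentiableAt ℝ f s) (hf0 : f 0 = 0) (hv0 : v 0 ≠ 0)
    (hf' : ContinuousAt (deriv f) (v 0)) {T Z : ℝ} (hT : 0 ≤ T) (hTZ : T < Z)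
    (hcrit : 0 < T → deriv v T = 0) (hne : ∀ s ∈ Ioo T Z, v s ≠ 0)
    (hvZ : v Z = 0) (hdvZ : deriv v Z = 0) : ∃ s ∈ Ioo T Z, 0 ≤ deriv v s * φ s := by
  by_contra! hneg
  have hstart := hv.exists_nonneg_tendsto_wronskian hφ hd hf hv0 hf' hT hcrit
    (mem_of_superset (Ioo_mem_nhdsGT hTZ) hneg)
  have hpos := hv.wronskian_pos hφ hd hf hfd hT hTZ hne hneg hstart
  simp [wronskian, hvZ, hdvZ, hf0] at hpos

theorem exists_nonneg_deriv_mul_of_tendsto_zero (hv : RadialSolution d f v)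
    (hφ : LinearizedSolution d f v φ) (hd : 0 < d) (hf : Continuous f)
    (hfd : ∀ s, s ≠ 0 → DifferentiableAt ℝ f s) (hsign : ∀ᶠ s in 𝓝 0, s * f s ≤ 0)
    (hv0 : v 0 ≠ 0) (hf' : ContinuousAt (deriv f) (v 0)) {T : ℝ} (hT : 0 ≤ T)
    (hcrit : 0 < T → deriv v T = 0) (hdec : ∀ s, T < s → v s * deriv v s < 0)
    (hlim : Tendsto v atTop (𝓝 0)) : ∃ s, T < s ∧ 0 ≤ deriv v s * φ s := by
  by_contra! hneg
  have hne (s : ℝ) (hs : T < s) : v s ≠ 0 := left_ne_zero_of_mul (hdec s hs).ne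
  have hstart := hv.exists_nonneg_tendsto_wronskian hφ hd hf hv0 hf' hT hcrit
    (mem_of_superset self_mem_nhdsWithin hneg)
  obtain ⟨R, hR⟩ := eventually_atTop.1 ((hlim.eventually hsign).and (eventually_gt_atTop T))
  have hTR : T < R := (hR R le_rfl).2
  have hfφ (r : ℝ) (hr : R ≤ r) : f (v r) * φ r ≤ 0 := by
    have hTr : T < r := hTR.trans_le hr
    have hvφ : 0 < v r * φ r := by
      have := mul_pos_of_neg_of_neg (hdec r hTr) (hneg r hTr)
      nlinarith [sq_nonneg (deriv v r)]
    have hprod : v r * φ r * (f (v r) * φ r) ≤ 0 := by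
      nlinarith [(hR r hr).1, sq_nonneg (φ r)]
    exact nonpos_of_mul_nonpos_right hprod hvφ
  have hmono : StrictMonoOn (wronskian d f v φ) (Ioi T) :=
    hv.strictMonoOn_wronskian hφ hd hf hfd (convex_Ioi T) (fun s hs => hT.trans_lt hs)
      (fun s hs => hne s (interior_subset hs)) (fun s hs => hneg s (interior_subset hs))
  have hpos : 0 < wronskian d f v φ R :=
    hv.wronskian_pos hφ hd hf hfd hT hTR (fun s hs => hne s hs.1) (fun s hs => hneg s hs.1) hstart
  obtain ⟨r, hr, hnonneg⟩ := hv.exists_nonneg_deriv_mul_of_le_wronskian hφ hd (hT.trans_lt hTR)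
    hpos hfφ fun r hr => hmono.monotoneOn hTR (hTR.trans_le hr) hr
  exact (hneg r (hTR.trans_le hr)).not_ge hnonneg

end RadialSolution

end Solutions

/-! ### The points `T_k` and `Z_k` -/

/-- The interval `(T_{k-1}(α), Z_k(α))`, which is a half-line if `Z_k(α) = ∞`. -/
def lastInterval (u : ℝ → ℝ → ℝ) (k : ℕ) (α : ℝ) : Set ℝ :=
  {t | Tk u (k - 1) α < t ∧ (BddAbove (ZsetK u k α) → t < Zk u k α)}

section Endpoints

variable {u : ℝ → ℝ → ℝ} {k : ℕ} {α : ℝ}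

theorem Tk_nonneg (u : ℝ → ℝ → ℝ) (k : ℕ) (α : ℝ) : 0 ≤ Tk u k α := by
  induction k with
  | zero => exact le_rfl
  | succ k ih =>
    have hZ : 0 ≤ Zk u (k + 1) α := Real.sSup_nonneg fun r hr => ih.trans hr.1.le
    exact Real.sInf_nonneg fun r hr => hZ.trans hr.1.le

theorem deriv_Tk_eq_zero (hT : 0 < Tk u k α) (hc : ContinuousAt (deriv (u α)) (Tk u k α)) :
    deriv (u α) (Tk u k α) = 0 := by
  cases k with
  | zero => exact absurd hT (lt_irrefl 0)
  | succ k =>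
    set S := {r | Zk u (k + 1) α < r ∧ deriv (u α) r = 0}
    have hTS : Tk u (k + 1) α = sInf S := rfl
    have hS : S.Nonempty := by
      by_contra! hempty
      rw [hTS, hempty, Real.sInf_empty] at hT
      exact lt_irrefl 0 hT
    have hfreq : ∃ᶠ r in 𝓝 (Tk u (k + 1) α), r ∈ S :=
      mem_closure_iff_frequently.1 (csInf_mem_closure hS ⟨_, fun r hr => hr.1.le⟩)
    by_contra hne
    exact hfreq ((hc.eventually_ne hne).mono fun r hr hrS => hr hrS.2)

theorem Zk_eq_sSup (hk : 1 ≤ k) : Zk u k α = sSup (ZsetK u k α) := by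
  obtain ⟨i, rfl⟩ := Nat.exists_eq_add_of_le' hk
  rfl

theorem pos_of_mem_Nk (h : α ∈ Nk u k) : 0 < α := by
  induction k with
  | zero => exact h
  | succ k ih =>
    cases k with
    | zero => exact h.1
    | succ k => exact ih h.1

theorem one_le_of_mem_Gk (h : α ∈ Gk u k) : 1 ≤ k := by
  cases k with
  | zero => exact h.elim
  | succ k => exact Nat.succ_pos k

theorem pos_of_mem_Gk (h : α ∈ Gk u k) : 0 < α := by
  match k, h with
  | 1, h => exact h.1
  | k + 2, h => exact pos_of_mem_Nk h.1

theorem uAtZ_eq_zero_of_mem_Gk (h : α ∈ Gk u k) : uAtZ u k α = 0 := by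
  match k, h with
  | 1, h => exact h.2.1
  | k + 2, h => exact h.2.2.1

theorem duAtZ_eq_zero_of_mem_Gk (h : α ∈ Gk u k) : duAtZ u k α = 0 := by
  match k, h with
  | 1, h => exact h.2.2
  | k + 2, h => exact h.2.2.2

theorem isPreconnected_lastInterval : IsPreconnected (lastInterval u k α) :=
  OrdConnected.isPreconnected
    ⟨fun _ hx _ hy _ hz => ⟨hx.1.trans_le hz.1, fun hb => hz.2.trans_lt (hy.2 hb)⟩⟩

theorem signs_of_mem_lastInterval (hk : 1 ≤ k) {s : ℝ} (hs : s ∈ lastInterval u k α) :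
    (-1 : ℝ) ^ k * u α s < 0 ∧ 0 < (-1 : ℝ) ^ k * deriv (u α) s := by
  obtain ⟨r, hr, hsr⟩ : ∃ r ∈ ZsetK u k α, s < r := by
    by_cases hb : BddAbove (ZsetK u k α)
    · have hsZ : s < sSup (ZsetK u k α) := Zk_eq_sSup hk ▸ hs.2 hb
      refine exists_lt_of_lt_csSup ?_ hsZ
      by_contra! hempty
      rw [hempty, Real.sSup_empty] at hsZ
      exact hsZ.not_gt ((Tk_nonneg u (k - 1) α).trans_lt hs.1)
    · exact not_bddAbove_iff.1 hb s
  exact hr.2 s ⟨hs.1, hsr⟩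

theorem mul_deriv_neg_of_mem_lastInterval (hk : 1 ≤ k) {s : ℝ} (hs : s ∈ lastInterval u k α) :
    u α s * deriv (u α) s < 0 := by
  obtain ⟨hu, hdu⟩ := signs_of_mem_lastInterval hk hs
  calc u α s * deriv (u α) s
      = (-1 : ℝ) ^ k * u α s * ((-1 : ℝ) ^ k * deriv (u α) s) := by
        rw [mul_mul_mul_comm, ← mul_pow, neg_one_mul, neg_neg, one_pow, one_mul]
    _ < 0 := mul_neg_of_neg_of_pos hu hdu

theorem Tk_lt_Zk_of_mem_Gk (hα : α ∈ Gk u k) (hu0 : u α 0 = α) (hb : BddAbove (ZsetK u k α)) :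
    Tk u (k - 1) α < Zk u k α := by
  have hZ := Zk_eq_sSup (u := u) (α := α) (one_le_of_mem_Gk hα)
  rcases (ZsetK u k α).eq_empty_or_nonempty with hempty | ⟨r, hr⟩
  · have huZ := uAtZ_eq_zero_of_mem_Gk hα
    rw [uAtZ, if_pos hb, hZ, hempty, Real.sSup_empty, hu0] at huZ
    exact absurd huZ (pos_of_mem_Gk hα).ne'
  · exact hr.1.trans_le (hZ ▸ le_csSup hb hr)

theorem tendsto_atTop_zero_of_mem_Gk (hα : α ∈ Gk u k) (hb : ¬BddAbove (ZsetK u k α)) :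
    Tendsto (u α) atTop (𝓝 0) := by
  have hsigns (s : ℝ) (hs : Tk u (k - 1) α < s) :=
    signs_of_mem_lastInterval (one_le_of_mem_Gk hα) ⟨hs, fun h => absurd h hb⟩
  obtain ⟨l, hl⟩ : ∃ l, Tendsto (fun r => (-1 : ℝ) ^ k * u α r) atTop (𝓝 l) := by
    refine exists_tendsto_of_deriv_pos (fun s hs => ?_) fun s hs => (hsigns s hs).1.le
    rw [deriv_const_mul_field]
    exact (hsigns s hs).2
  have hlim : Tendsto (u α) atTop (𝓝 ((-1 : ℝ) ^ k * l)) := by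
    refine (hl.const_mul _).congr fun r => ?_
    rw [← mul_assoc, ← mul_pow, neg_one_mul, neg_neg, one_pow, one_mul]
  have huZ := uAtZ_eq_zero_of_mem_Gk hα
  rw [uAtZ, if_neg hb] at huZ
  exact huZ ▸ tendsto_nhds_limUnder ⟨_, hlim⟩

end Endpoints

theorem RadialSolution.exists_nonneg_deriv_mul_of_mem_Gk {d : ℝ} {f φ : ℝ → ℝ}
    {u : ℝ → ℝ → ℝ} {k : ℕ} {α : ℝ} (hu : RadialSolution d f (u α))
    (hφ : LinearizedSolution d f (u α) φ) (hd : 0 < d) (hf : Continuous f)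
    (hfd : ∀ s, s ≠ 0 → DifferentiableAt ℝ f s) (hf' : ContinuousAt (deriv f) α)
    (hsign : ∀ᶠ s in 𝓝 0, s * f s ≤ 0) (hα : α ∈ Gk u k) (hu0 : u α 0 = α) :
    ∃ t ∈ lastInterval u k α, 0 ≤ deriv (u α) t * φ t := by
  set T := Tk u (k - 1) α
  have hT : 0 ≤ T := Tk_nonneg u (k - 1) α
  have hcrit (hpos : 0 < T) : deriv (u α) T = 0 :=
    deriv_Tk_eq_zero hpos (hu.differentiableAt_deriv T hpos).continuousAt
  have hdec (s : ℝ) (hs : s ∈ lastInterval u k α) : u α s * deriv (u α) s < 0 :=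
    mul_deriv_neg_of_mem_lastInterval (one_le_of_mem_Gk hα) hs
  have hv0 : u α 0 ≠ 0 := by
    rw [hu0]
    exact (pos_of_mem_Gk hα).ne'
  replace hf' : ContinuousAt (deriv f) (u α 0) := by rwa [hu0]
  by_cases hb : BddAbove (ZsetK u k α)
  · have huZ := uAtZ_eq_zero_of_mem_Gk hα
    have hduZ := duAtZ_eq_zero_of_mem_Gk hα
    rw [uAtZ, if_pos hb] at huZ
    rw [duAtZ, if_pos hb] at hduZ
    obtain ⟨t, ht, hnonneg⟩ := hu.exists_nonneg_deriv_mul_of_double_zero hφ hd hf hfd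
      (eq_zero_of_eventually_mul_nonpos hf.continuousAt hsign) hv0 hf' hT
      (Tk_lt_Zk_of_mem_Gk hα hu0 hb) hcrit
      (fun s hs => left_ne_zero_of_mul (hdec s ⟨hs.1, fun _ => hs.2⟩).ne) huZ hduZ
    exact ⟨t, ⟨ht.1, fun _ => ht.2⟩, hnonneg⟩
  · obtain ⟨t, ht, hnonneg⟩ := hu.exists_nonneg_deriv_mul_of_tendsto_zero hφ hd hf hfd hsign hv0
      hf' hT hcrit (fun s hs => hdec s ⟨hs, fun h => absurd h hb⟩)
      (tendsto_atTop_zero_of_mem_Gk hα hb)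
    exact ⟨t, ⟨ht, fun h => absurd h hb⟩, hnonneg⟩

/-! ### Consequences of (f1) and of the initial value problem -/

theorem Hf1.eventually_mul_nonpos {f : ℝ → ℝ} {b β : ℝ} (h : Hf1 f b β) :
    ∀ᶠ s in 𝓝 0, s * f s ≤ 0 := by
  obtain ⟨hodd, -, hb, -, -, hle, -, -⟩ := h
  filter_upwards [Icc_mem_nhds (neg_lt_zero.2 hb) hb] with s hs
  rcases le_total 0 s with hs0 | hs0
  · exact mul_nonpos_of_nonneg_of_nonpos hs0 (hle s ⟨hs0, hs.2⟩)
  · rw [← neg_mul_neg, ← hodd]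
    exact mul_nonpos_of_nonneg_of_nonpos (neg_nonneg.2 hs0)
      (hle (-s) ⟨neg_nonneg.2 hs0, neg_le.1 hs.1⟩)

theorem Family.radialSolution {n : ℕ} {f : ℝ → ℝ} {u : ℝ → ℝ → ℝ} (hu : Family n f u) {α : ℝ}
    (hα : 0 < α) : RadialSolution (n - 1) f (u α) := by
  obtain ⟨-, hdu0, hc, hd, heq⟩ := hu.1 α hα
  have hderiv : ContinuousOn (deriv (u α)) (Ici 0) :=
    hu.2.2.comp (f := fun r : ℝ => (α, r)) (by fun_prop) fun r hr => ⟨hα, hr⟩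
  refine ⟨fun r hr => (hd r hr).1, fun r hr => (hd r hr).2, heq,
    (hc 0 self_mem_Ici).mono Ioi_subset_Ici_self, ?_⟩
  simpa only [hdu0] using ((hderiv 0 self_mem_Ici).mono Ioi_subset_Ici_self).tendsto

end Paper

theorem phi_zero_in_last_interval_general {d : ℝ} (hd : 0 < d) {f : ℝ → ℝ} (hf : Continuous f)
    (hfd : ∀ s, s ≠ 0 → DifferentiableAt ℝ f s) (hsign : ∀ᶠ s in 𝓝 0, s * f s ≤ 0)
    {u : ℝ → ℝ → ℝ} {k : ℕ} {α : ℝ} (hα : α ∈ Gk u k) (hf' : ContinuousAt (deriv f) α)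
    (hu : RadialSolution d f (u α)) (hu0 : u α 0 = α) {φ : ℝ → ℝ}
    (hφ : LinearizedSolution d f (u α) φ) :
    ∃ t, Tk u (k - 1) α < t ∧ (BddAbove (ZsetK u k α) → t < Zk u k α) ∧ φ t = 0 := by
  obtain ⟨s, hs, hs_nonneg⟩ := hu.exists_nonneg_deriv_mul_of_mem_Gk hφ hd hf hfd hf' hsign hα hu0
  obtain ⟨t, ht, ht_nonneg⟩ :=
    hu.exists_nonneg_deriv_mul_of_mem_Gk hφ.neg hd hf hfd hf' hsign hα hu0
  have hcont : ContinuousOn (fun r => deriv (u α) r * φ r) (lastInterval u k α) := fun r hr => by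
    have hr0 : 0 < r := (Tk_nonneg u (k - 1) α).trans_lt hr.1
    exact ((hu.differentiableAt_deriv r hr0).mul
      (hφ.differentiableAt r hr0)).continuousAt.continuousWithinAt
  obtain ⟨z, hz, hz0⟩ := isPreconnected_lastInterval.intermediate_value ht hs hcont
    (show (0 : ℝ) ∈ Icc _ _ from ⟨by linarith, hs_nonneg⟩)
  have hdu : deriv (u α) z ≠ 0 :=
    right_ne_zero_of_mul (mul_deriv_neg_of_mem_lastInterval (one_le_of_mem_Gk hα) hz).ne
  exact ⟨z, hz.1, hz.2, (mul_eq_zero.1 hz0).resolve_left hdu⟩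

/-- **Proposition 3.1 (ii).** If `α ∈ G_k` then `φ = ∂u/∂α` has at least one zero in
`(T_{k-1}(α), Z_k(α))` (with `T₀ = 0`, and including the case `Z_k(α) = ∞`). -/
theorem phi_zero_in_last_interval
    (n : ℕ) (hn : 2 ≤ n)
    (f : ℝ → ℝ) (b β : ℝ) (hf : Continuous f)
    (h1 : Hf1 f b β) (h2 : Hf2 f)
    (u : ℝ → ℝ → ℝ) (hu : Family n f u)
    (k : ℕ) (hk : 1 ≤ k) (α : ℝ) (hα : α ∈ Gk u k)
    (φ : ℝ → ℝ)
    (hφc : ContinuousOn φ (Ici 0))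
    (hφd : ∀ r : ℝ, 0 < r → DifferentiableAt ℝ φ r ∧ DifferentiableAt ℝ (deriv φ) r)
    (hφ0 : φ 0 = 1) (hφ'0 : deriv φ 0 = 0)
    (hφeq : ∀ r : ℝ, 0 < r → u α r ≠ 0 →
      deriv (deriv φ) r + ((n : ℝ) - 1) / r * deriv φ r + deriv f (u α r) * φ r = 0) :
    ∃ t, Tk u (k - 1) α < t ∧ (BddAbove (ZsetK u k α) → t < Zk u k α) ∧ φ t = 0 := by
  have hα0 : 0 < α := pos_of_mem_Gk hα
  exact phi_zero_in_last_interval_general (sub_pos.2 (by exact_mod_cast hn)) hf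
    (fun _ => differentiableAt_of_odd h1.1 h2.2.1) h1.eventually_mul_nonpos hα
    (h2.2.2.1.continuousAt (Ioi_mem_nhds hα0)) (hu.radialSolution hα0) (hu.1 α hα0).1
    ⟨fun r hr => (hφd r hr).1, fun r hr => (hφd r hr).2, hφeq,
      (hφc 0 self_mem_Ici).mono Ioi_subset_Ici_self⟩
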